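/- Let (A, ≺_{α,β}, ≻_{α,β}, Ω) be an Ω-relative pre-anti-flexible algebra. Define, for all (α,β) ∈ Ω² and x, y ∈ A, x ⊛_{α,β} y := x ≺_{α,β} y + x ≻_{α,β} y. Then (A, ⊛_{α,β}, Ω) is an Ω-relative anti-flexible algebra, i.e. (x ⊛_{α,β} y) ⊛_{αβ,γ} z − x ⊛_{α,βγ} (y ⊛_{β,γ} z) = (z ⊛_{γ,β} y) ⊛_{γβ,α} x − z ⊛_{γ,βα} (y ⊛_{β,α} x) for all x, y, z ∈ A and α, β, γ ∈ Ω. -/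

import Mathlib

/-!
The associator of `⊛` at `(x, y, z)` is the sum of the three mixed associators
`(x ≻ y) ≺ z - x ≻ (y ≺ z)`, `(x ⊛ y) ≻ z - x ≻ (y ≻ z)` and `(x ≺ y) ≺ z - x ≺ (y ⊛ z)`.
Reversing the arguments together with their indices fixes the first one, by the first axiom, and
exchanges the other two, by the second axiom; hence it fixes the sum.
-/

section MixedAssociator

variable {Ω A : Type*} [Mul Ω] [AddCommGroup A]

/-- The relative associator `(x ∘₁ y) ∘₂ z - x ∘₃ (y ∘₄ z)` of four families of products indexed
by pairs of elements of `Ω`, where `x`, `y`, `z` carry the indices `α`, `β`, `γ` and a product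
carries the product of the indices of its factors. Both axioms of a relative pre-anti-flexible
algebra, and the relative anti-flexible identity, compare such associators at `(x, y, z)` and at
`(z, y, x)`. -/
def mixedAssociator (mul₁ mul₂ mul₃ mul₄ : Ω → Ω → A → A → A) (α β γ : Ω) (x y z : A) : A :=
  mul₂ (α * β) γ (mul₁ α β x y) z - mul₃ α (β * γ) x (mul₄ β γ y z)

variable {prec succ : Ω → Ω → A → A → A}

theorem mixedAssociator_prec_add_succ
    (prec_add_left : ∀ α β x x' y, prec α β (x + x') y = prec α β x y + prec α β x' y)
    (succ_add_right : ∀ α β x y y', succ α β x (y + y') = succ α β x y + succ α β x y')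
    (α β γ : Ω) (x y z : A) :
    mixedAssociator (prec + succ) (prec + succ) (prec + succ) (prec + succ) α β γ x y z =
      mixedAssociator succ prec succ prec α β γ x y z +
        mixedAssociator (prec + succ) succ succ succ α β γ x y z +
        mixedAssociator prec prec prec (prec + succ) α β γ x y z := by
  simp only [mixedAssociator, Pi.add_apply, prec_add_left, succ_add_right]
  abel

theorem relativePreAntiFlexible_to_relativeAntiFlexible_general
    (prec_add_left : ∀ α β x x' y, prec α β (x + x') y = prec α β x y + prec α β x' y)
    (succ_add_right : ∀ α β x y y', succ α β x (y + y') = succ α β x y + succ α β x y')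
    (inner_reverse : ∀ α β γ x y z,
      mixedAssociator succ prec succ prec α β γ x y z =
        mixedAssociator succ prec succ prec γ β α z y x)
    (outer_reverse : ∀ α β γ x y z,
      mixedAssociator (prec + succ) succ succ succ α β γ x y z =
        mixedAssociator prec prec prec (prec + succ) γ β α z y x)
    (α β γ : Ω) (x y z : A) :
    mixedAssociator (prec + succ) (prec + succ) (prec + succ) (prec + succ) α β γ x y z =
      mixedAssociator (prec + succ) (prec + succ) (prec + succ) (prec + succ) γ β α z y x := by
  have decomposition := mixedAssociator_prec_add_succ prec_add_left succ_add_right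
  rw [decomposition α β γ x y z, decomposition γ β α z y x, inner_reverse α β γ x y z,
    outer_reverse α β γ x y z, outer_reverse γ β α z y x]
  exact add_right_comm _ _ _

end MixedAssociator

/-- the sum `x ⊛_{α,β} y := x ≺_{α,β} y + x ≻_{α,β} y` of an
Ω-relative pre-anti-flexible algebra is an Ω-relative anti-flexible product. -/
theorem relativePreAntiFlexible_to_relativeAntiFlexible
    (k : Type*) [Field k] (Ω : Type*) [CommSemigroup Ω]
    (A : Type*) [AddCommGroup A] [Module k A]
    (prec succ : Ω → Ω → A →ₗ[k] A →ₗ[k] A)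
    (h1 : ∀ (α β γ : Ω) (x y z : A),
      prec (α * β) γ (succ α β x y) z - succ α (β * γ) x (prec β γ y z) =
        prec (γ * β) α (succ γ β z y) x - succ γ (β * α) z (prec β α y x))
    (h2 : ∀ (α β γ : Ω) (x y z : A),
      succ (α * β) γ (prec α β x y + succ α β x y) z - succ α (β * γ) x (succ β γ y z) =
        prec (γ * β) α (prec γ β z y) x - prec γ (β * α) z (prec β α y x + succ β α y x))
    (ast : Ω → Ω → A → A → A)
    (hast : ∀ (α β : Ω) (x y : A), ast α β x y = prec α β x y + succ α β x y) :
    ∀ (α β γ : Ω) (x y z : A),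
      ast (α * β) γ (ast α β x y) z - ast α (β * γ) x (ast β γ y z) =
        ast (γ * β) α (ast γ β z y) x - ast γ (β * α) z (ast β α y x) := by
  obtain rfl : ast = (prec · · · ·) + (succ · · · ·) := by
    funext α β x y
    exact hast α β x y
  exact relativePreAntiFlexible_to_relativeAntiFlexible_general
    (fun α β ↦ (prec α β).map_add₂) (fun α β x ↦ (succ α β x).map_add) h1 h2
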